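/- Let a > 0 and δ ∈ (0,1/8) be fixed. The series ζ_R(s) = Σ_{k≥1} R_k(s) converges absolutely and locally uniformly on {s ∈ ℂ : Re(s) > 1}, and its sum extends to a meromorphic function on the half-plane {Re(s) > -3} whose only pole is at s = 1. This extension is holomorphic at s = 0, and its derivative at 0 satisfies ζ_R'(0) = O(1/a) as a → +∞; in particular ζ_R'(0) → 0 as a → +∞. -/

import Mathlib

open MeasureTheory Filter

/-- The exponential integral `E₁(x) = ∫_x^∞ e^{-v}/v dv`, for `x > 0`. -/
noncomputable def expIntegralE1 (x : ℝ) : ℝ :=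
  ∫ v in Set.Ioi x, Real.exp (-v) / v

/-- `R_k(s) = -(2 sin(πs)/π) · e^{4πka} · E₁(4πka) · ∫_{k^δ}^∞ (t² - 1/4)^{-s} · 2t dt`. -/
noncomputable def cuspR (a δ : ℝ) (k : ℕ) (s : ℂ) : ℂ :=
  -(2 * Complex.sin ((Real.pi : ℂ) * s) / (Real.pi : ℂ)) *
    ((Real.exp (4 * Real.pi * k * a) * expIntegralE1 (4 * Real.pi * k * a) : ℝ) : ℂ) *
    ∫ t in Set.Ioi ((k : ℝ) ^ δ),
      ((t ^ 2 - 1 / 4 : ℝ) : ℂ) ^ (-s) * ((2 * t : ℝ) : ℂ)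

/-!
Up to an error of order `x⁻²`, `e^x E₁(x)` is `x⁻¹`. With `x = 4πka` that error is summable against
`(k^(2δ) - 1/4)^(1-s)` in the half-plane `Re s > 1 - 1/(2δ)`. In the main part, the binomial
expansion of `(k^(2δ) - 1/4)^(1-s)` produces shifted zeta functions `ζ(1 + 2δ(s - 1 + j))`, whose
poles at `s = 1 - j` are cancelled by the zeros of `sin(πs)`. The integral over `t` contributes
`1/(s-1)`, so the series continues to `H(s)/(s-1)`, and the pole at `1` is genuine because
`H(1) = (4πaδ)⁻¹`. The main part of `H` is proportional to `1/a` and the error part is `O(a⁻²)`.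
-/

section ExponentialIntegral

variable {x : ℝ}

lemma integrableOn_exp_neg_div_pow (hx : 0 < x) (m : ℕ) :
    IntegrableOn (fun v : ℝ => Real.exp (-v) / v ^ m) (Set.Ioi x) := by
  refine Integrable.mono' ((integrableOn_exp_neg_Ioi x).div_const (x ^ m))
    (by fun_prop : Measurable _).aestronglyMeasurable ?_
  refine (ae_restrict_iff' measurableSet_Ioi).2 (Eventually.of_forall fun v (hv : x < v) => ?_)
  have hv0 : 0 < v := hx.trans hv
  rw [Real.norm_of_nonneg (by positivity)]
  gcongr

lemma integral_exp_neg_div_pow_nonneg (hx : 0 < x) (m : ℕ) :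
    0 ≤ ∫ v in Set.Ioi x, Real.exp (-v) / v ^ m :=
  setIntegral_nonneg measurableSet_Ioi fun _ hv =>
    div_nonneg (Real.exp_pos _).le (pow_nonneg (hx.trans hv).le _)

lemma integral_exp_neg_div_pow_add_mul (hx : 0 < x) (m : ℕ) :
    (∫ v in Set.Ioi x, Real.exp (-v) / v ^ m) +
      m * ∫ v in Set.Ioi x, Real.exp (-v) / v ^ (m + 1) = Real.exp (-x) / x ^ m := by
  have hderiv : ∀ v ∈ Set.Ici x, HasDerivAt (fun v : ℝ => -(Real.exp (-v) / v ^ m))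
      (Real.exp (-v) / v ^ m + m * (Real.exp (-v) / v ^ (m + 1))) v := by
    intro v hv
    have hv0 : v ≠ 0 := (hx.trans_le hv).ne'
    convert! ((hasDerivAt_neg v).exp.div (hasDerivAt_pow m v) (pow_ne_zero m hv0)).neg using 1
    cases m with
    | zero => simp
    | succ m => simp only [Nat.add_sub_cancel]; field_simp; ring
  have hlim : Tendsto (fun v : ℝ => -(Real.exp (-v) / v ^ m)) atTop (nhds 0) := by
    refine squeeze_zero_norm' ?_ Real.tendsto_exp_neg_atTop_nhds_zero
    filter_upwards [eventually_ge_atTop 1] with v hv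
    rw [norm_neg, Real.norm_of_nonneg (by positivity)]
    exact div_le_self (Real.exp_pos _).le (one_le_pow₀ hv)
  have hint := integrableOn_exp_neg_div_pow hx m
  have hint' := (integrableOn_exp_neg_div_pow hx (m + 1)).const_mul (m : ℝ)
  rw [← integral_const_mul, ← integral_add hint hint',
    integral_Ioi_of_hasDerivAt_of_tendsto' hderiv (hint.add hint') hlim, zero_sub, neg_neg]

lemma integral_exp_neg_div_pow_le (hx : 0 < x) (m : ℕ) :
    ∫ v in Set.Ioi x, Real.exp (-v) / v ^ m ≤ Real.exp (-x) / x ^ m := by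
  rw [← integral_exp_neg_div_pow_add_mul hx m]
  exact le_add_of_nonneg_right (mul_nonneg m.cast_nonneg (integral_exp_neg_div_pow_nonneg hx _))

/-- The exponential integral freed of its exponential decay, `e^x E₁(x)`; it is asymptotic to
`1 / x` at infinity. -/
noncomputable def scaledE1 (x : ℝ) : ℝ :=
  Real.exp x * expIntegralE1 x

lemma scaledE1_eq (hx : 0 < x) :
    scaledE1 x = x⁻¹ - Real.exp x * ∫ v in Set.Ioi x, Real.exp (-v) / v ^ 2 := by
  have hrec := integral_exp_neg_div_pow_add_mul hx 1
  simp only [pow_one, Nat.cast_one, one_mul, one_add_one_eq_two] at hrec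
  rw [scaledE1, expIntegralE1, eq_sub_of_add_eq hrec, mul_sub, ← mul_div_assoc, ← Real.exp_add,
    add_neg_cancel, Real.exp_zero, one_div]

lemma scaledE1_nonneg (hx : 0 < x) : 0 ≤ scaledE1 x := by
  have := integral_exp_neg_div_pow_nonneg hx 1
  simp only [pow_one] at this
  exact mul_nonneg (Real.exp_pos x).le this

lemma scaledE1_le_inv (hx : 0 < x) : scaledE1 x ≤ x⁻¹ := by
  rw [scaledE1_eq hx]
  exact sub_le_self _ (mul_nonneg (Real.exp_pos x).le (integral_exp_neg_div_pow_nonneg hx 2))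

lemma abs_scaledE1_sub_inv_le (hx : 0 < x) : |scaledE1 x - x⁻¹| ≤ (x ^ 2)⁻¹ := by
  have hnonneg := mul_nonneg (Real.exp_pos x).le (integral_exp_neg_div_pow_nonneg hx 2)
  rw [scaledE1_eq hx, sub_sub_cancel_left, abs_neg, abs_of_nonneg hnonneg]
  calc Real.exp x * ∫ v in Set.Ioi x, Real.exp (-v) / v ^ 2
      ≤ Real.exp x * (Real.exp (-x) / x ^ 2) := by
        gcongr
        exact integral_exp_neg_div_pow_le hx 2
    _ = (x ^ 2)⁻¹ := by
        rw [← mul_div_assoc, ← Real.exp_add, add_neg_cancel, Real.exp_zero, one_div]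

end ExponentialIntegral

section BinomialTail

lemma differentiable_choose (n : ℕ) : Differentiable ℂ fun w : ℂ => Ring.choose w n := by
  simp only [Ring.choose_eq_smul, ← Polynomial.aeval_eq_smeval, smul_eq_mul]
  exact (Polynomial.differentiable_aeval (𝕜 := ℂ) (descPochhammer ℤ n)).const_mul _

lemma norm_descPochhammer_smeval_le (w : ℂ) (n : ℕ) :
    ‖(descPochhammer ℤ n).smeval w‖ ≤ (ascPochhammer ℕ n).smeval ‖w‖ := by
  induction n with
  | zero => simp
  | succ n ih =>
    have hfactor : ‖w - n‖ ≤ ‖w‖ + n := (norm_sub_le _ _).trans_eq (by simp)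
    simpa [descPochhammer_succ_right, ascPochhammer_succ_right, Polynomial.smeval_mul,
      Polynomial.smeval_sub, Polynomial.smeval_add, Polynomial.smeval_natCast] using
      mul_le_mul ih hfactor (norm_nonneg _) ((norm_nonneg _).trans ih)

lemma norm_choose_le_multichoose_norm (w : ℂ) (n : ℕ) :
    ‖Ring.choose w n‖ ≤ Ring.multichoose ‖w‖ n := by
  have hfact : (0 : ℝ) < n.factorial := by exact_mod_cast n.factorial_pos
  have h := norm_descPochhammer_smeval_le w n
  rw [Ring.descPochhammer_eq_factorial_smul_choose,
    ← Ring.factorial_nsmul_multichoose_eq_ascPochhammer, nsmul_eq_mul, nsmul_eq_mul, norm_mul,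
    Complex.norm_natCast] at h
  exact le_of_mul_le_mul_left h hfact

lemma hasSum_choose_mul_pow (w : ℂ) {z : ℂ} (hz : ‖z‖ < 1) :
    HasSum (fun n : ℕ => Ring.choose w n * z ^ n) ((1 + z) ^ w) := by
  have h := (Complex.one_add_cpow_hasFPowerSeriesOnBall_zero (a := w)).hasSum (y := z)
    (by simpa [← ofReal_norm] using hz)
  simpa only [binomialSeries_apply, List.ofFn_const, List.prod_replicate, smul_eq_mul, zero_add]
    using h

lemma hasSum_multichoose_mul_pow (a : ℝ) {r : ℝ} (hr : |r| < 1) :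
    HasSum (fun n : ℕ => Ring.multichoose a n * r ^ n) ((1 - r) ^ (-a)) := by
  have h := (Real.one_div_one_sub_rpow_hasFPowerSeriesOnBall_zero a).hasSum (y := r)
    (by simpa [← ofReal_norm] using hr)
  have hbase : 0 ≤ 1 - r := by linarith [le_abs_self r]
  simpa only [FormalMultilinearSeries.ofScalars_apply_eq, smul_eq_mul, zero_add,
    ← Ring.multichoose_eq, one_div, ← Real.rpow_neg hbase] using h

lemma norm_one_add_cpow_sub_sum_choose_le (w : ℂ) (J : ℕ) {z : ℂ} {r : ℝ} (hr0 : 0 < r)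
    (hr1 : r < 1) (hz : ‖z‖ ≤ r) :
    ‖(1 + z) ^ w - ∑ j ∈ Finset.range J, Ring.choose w j * z ^ j‖ ≤
      (‖z‖ / r) ^ J * (1 - r) ^ (-‖w‖) := by
  have hcoeff (n : ℕ) : 0 ≤ Ring.multichoose ‖w‖ n :=
    (norm_nonneg _).trans (norm_choose_le_multichoose_norm w n)
  have hmajorant := hasSum_multichoose_mul_pow ‖w‖ (by rwa [abs_of_pos hr0])
  have hmajorant_tail : ∑' n, Ring.multichoose ‖w‖ (n + J) * r ^ (n + J) ≤ (1 - r) ^ (-‖w‖) := by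
    rw [← hmajorant.tsum_eq, ← hmajorant.summable.sum_add_tsum_nat_add J]
    exact le_add_of_nonneg_left (Finset.sum_nonneg fun n _ => by have := hcoeff n; positivity)
  have htail := (hasSum_nat_add_iff' J).2 (hasSum_choose_mul_pow w (hz.trans_lt hr1))
  have hterm (n : ℕ) : ‖Ring.choose w (n + J) * z ^ (n + J)‖ ≤
      (‖z‖ / r) ^ J * (Ring.multichoose ‖w‖ (n + J) * r ^ (n + J)) := by
    have := hcoeff (n + J)
    rw [norm_mul, norm_pow]
    calc ‖Ring.choose w (n + J)‖ * ‖z‖ ^ (n + J)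
        ≤ Ring.multichoose ‖w‖ (n + J) * (r ^ n * ‖z‖ ^ J) := by
          rw [pow_add]
          gcongr
          exact norm_choose_le_multichoose_norm w _
      _ = _ := by rw [div_pow, pow_add]; field_simp
  rw [← htail.tsum_eq]
  refine (tsum_of_norm_bounded
    (((summable_nat_add_iff J).2 hmajorant.summable).hasSum.mul_left _) hterm).trans ?_
  gcongr

/-- The error in truncating the binomial expansion
`(x - c)^w = ∑ⱼ (w choose j) (-c)^j x^(w - j)` after `J` terms. -/
noncomputable def binomialTail (c : ℝ) (J : ℕ) (x : ℝ) (w : ℂ) : ℂ :=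
  ((x - c : ℝ) : ℂ) ^ w - ∑ j ∈ Finset.range J, Ring.choose w j * (-c : ℂ) ^ j * (x : ℂ) ^ (w - j)

variable {c x : ℝ}

lemma binomialTail_zero (c x : ℝ) (w : ℂ) : binomialTail c 0 x w = ((x - c : ℝ) : ℂ) ^ w := by
  simp [binomialTail]

lemma differentiable_binomialTail (J : ℕ) (hx : 0 < x) (hxc : c < x) :
    Differentiable ℂ (binomialTail c J x) := by
  have hx' : (x : ℂ) ≠ 0 := by exact_mod_cast hx.ne'
  have hxc' : ((x - c : ℝ) : ℂ) ≠ 0 := by exact_mod_cast (sub_pos.2 hxc).ne'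
  have hchoose := differentiable_choose
  unfold binomialTail
  fun_prop (disch := exact Or.inl ‹_›)

lemma binomialTail_eq_cpow_mul (J : ℕ) (w : ℂ) (hx : 0 < x) (hxc : c ≤ x) :
    binomialTail c J x w = (x : ℂ) ^ w * ((1 + ((-(c / x) : ℝ) : ℂ)) ^ w -
      ∑ j ∈ Finset.range J, Ring.choose w j * ((-(c / x) : ℝ) : ℂ) ^ j) := by
  have hx' : (x : ℂ) ≠ 0 := by exact_mod_cast hx.ne'
  have hfactor : x - c = x * (1 + -(c / x)) := by field_simp; ring
  have hnonneg : 0 ≤ 1 + -(c / x) := by linarith [(div_le_one hx).2 hxc]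
  rw [binomialTail, hfactor, Complex.ofReal_mul, Complex.mul_cpow_ofReal_nonneg hx.le hnonneg,
    mul_sub, Finset.mul_sum, Complex.ofReal_add, Complex.ofReal_one]
  congr 1
  refine Finset.sum_congr rfl fun j _ => ?_
  rw [Complex.cpow_sub _ _ hx', Complex.cpow_natCast]
  push_cast
  rw [← neg_div, div_pow]
  field_simp

lemma norm_binomialTail_le (J : ℕ) (w : ℂ) (hc0 : 0 < c) (hc1 : c < 1) (hx : 1 ≤ x) :
    ‖binomialTail c J x w‖ ≤ (1 - c) ^ (-‖w‖) * x ^ (w.re - J) := by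
  have hx0 : 0 < x := one_pos.trans_le hx
  have hnorm : ‖((-(c / x) : ℝ) : ℂ)‖ = c / x := by
    rw [Complex.norm_real, norm_neg, Real.norm_of_nonneg (by positivity)]
  have hbound := norm_one_add_cpow_sub_sum_choose_le w J hc0 hc1
    (hnorm.trans_le (div_le_self hc0.le hx))
  rw [hnorm, show c / x / c = x⁻¹ by field_simp] at hbound
  rw [binomialTail_eq_cpow_mul J w hx0 (hc1.le.trans hx), norm_mul,
    Complex.norm_cpow_eq_rpow_re_of_pos hx0]
  calc _ ≤ x ^ w.re * (x⁻¹ ^ J * (1 - c) ^ (-‖w‖)) := by gcongr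
    _ = _ := by
      rw [Real.rpow_sub hx0, Real.rpow_natCast, inv_pow]
      ring

end BinomialTail

section LocallyUniformSummability

lemma summable_add_one_rpow_neg {p : ℝ} (hp : 1 < p) :
    Summable fun k : ℕ => ((k : ℝ) + 1) ^ (-p) := by
  simpa using (summable_nat_add_iff 1).2 (Real.summable_nat_rpow.2 (neg_lt_neg hp))

variable {X : Type*} [TopologicalSpace X] [LocallyCompactSpace X] {U : Set X} {f : ℕ → X → ℂ}
  {B p : X → ℝ}

lemma summableLocallyUniformlyOn_of_norm_le_mul_rpow (hU : IsOpen U) (hB : ContinuousOn B U)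
    (hp : ContinuousOn p U) (hp1 : ∀ s ∈ U, 1 < p s)
    (hf : ∀ k, ∀ s ∈ U, ‖f k s‖ ≤ B s * ((k : ℝ) + 1) ^ (-p s)) :
    SummableLocallyUniformlyOn f U := by
  refine SummableLocallyUniformlyOn_of_locally_bounded hU fun K hKU hK => ?_
  rcases K.eq_empty_or_nonempty with rfl | hne
  · exact ⟨0, summable_zero, by simp⟩
  obtain ⟨M, hM⟩ := (hK.image_of_continuousOn (hB.mono hKU)).bddAbove
  obtain ⟨s₀, hs₀, hmin⟩ := hK.exists_isMinOn hne (hp.mono hKU)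
  refine ⟨_, (summable_add_one_rpow_neg (hp1 s₀ (hKU hs₀))).mul_left M, fun k s hs => ?_⟩
  have hk : (1 : ℝ) ≤ (k : ℝ) + 1 := by simp
  calc ‖f k s‖ ≤ B s * ((k : ℝ) + 1) ^ (-p s) := hf k s (hKU hs)
    _ ≤ M * ((k : ℝ) + 1) ^ (-p s) := by
      gcongr
      exact hM ⟨s, hs, rfl⟩
    _ ≤ M * ((k : ℝ) + 1) ^ (-p s₀) := by
      have hB0 : 0 ≤ B s := nonneg_of_mul_nonneg_left ((norm_nonneg _).trans (hf k s (hKU hs)))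
        (by positivity)
      have hM0 : 0 ≤ M := hB0.trans (hM ⟨s, hs, rfl⟩)
      gcongr
      exact hmin hs

end LocallyUniformSummability

section ZetaRegularization

lemma hasSum_add_one_cpow_neg {z : ℂ} (hz : 1 < z.re) :
    HasSum (fun k : ℕ => ((k : ℂ) + 1) ^ (-z)) (riemannZeta z) := by
  have hsummable := (summable_nat_add_iff 1).2 (Complex.summable_one_div_nat_cpow.2 hz)
  simp only [one_div, ← Complex.cpow_neg, Nat.cast_add_one] at hsummable
  rw [zeta_eq_tsum_one_div_nat_add_one_cpow hz]
  simpa only [one_div, ← Complex.cpow_neg] using hsummable.hasSum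

/-- The product `f s * ζ (1 + β * (s - c))` with its removable singularity at `s = c` filled in,
for a function `f` vanishing at `c`. It is built from the entire function `s ↦ (s - 1) * ζ s`, which
is `DirichletCharacter.LFunctionTrivChar₁ 1`. -/
noncomputable def mulZetaExt (f : ℂ → ℂ) (c β s : ℂ) : ℂ :=
  dslope f c s * DirichletCharacter.LFunctionTrivChar₁ 1 (1 + β * (s - c)) / β

variable {f : ℂ → ℂ} {c β s : ℂ}

lemma LFunctionTrivChar₁_one_of_ne (hs : s ≠ 1) :
    DirichletCharacter.LFunctionTrivChar₁ 1 s = (s - 1) * riemannZeta s := by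
  simp [DirichletCharacter.LFunctionTrivChar₁, hs, DirichletCharacter.LFunctionTrivChar,
    DirichletCharacter.LFunction_modOne_eq]

lemma mulZetaExt_of_ne (hf : f c = 0) (hβ : β ≠ 0) (hs : s ≠ c) :
    mulZetaExt f c β s = f s * riemannZeta (1 + β * (s - c)) := by
  have hsc : s - c ≠ 0 := sub_ne_zero.2 hs
  have harg : 1 + β * (s - c) ≠ 1 := by simp [hβ, hsc]
  rw [mulZetaExt, LFunctionTrivChar₁_one_of_ne harg, dslope_of_ne f hs, slope_def_field, hf]
  field_simp
  ring

lemma mulZetaExt_self : mulZetaExt f c β c = deriv f c / β := by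
  simp [mulZetaExt, DirichletCharacter.LFunctionTrivChar₁]

lemma differentiable_mulZetaExt (hf : Differentiable ℂ f) (c β : ℂ) :
    Differentiable ℂ (mulZetaExt f c β) := by
  have hdslope : Differentiable ℂ (dslope f c) := by
    rw [← differentiableOn_univ] at hf ⊢
    exact (Complex.differentiableOn_dslope univ_mem).2 hf
  have hzeta := DirichletCharacter.differentiable_LFunctionTrivChar₁ 1
  unfold mulZetaExt
  fun_prop

end ZetaRegularization

section SimplePole

lemma not_continuousAt_div_sub {f : ℂ → ℂ} {c : ℂ} (hf : ContinuousAt f c) (hfc : f c ≠ 0) :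
    ¬ContinuousAt (fun s => f s / (s - c)) c := by
  intro hquot
  have hprod : Tendsto (fun s => f s / (s - c) * (s - c)) (nhdsWithin c {c}ᶜ) (nhds 0) := by
    have hsub : Tendsto (fun s => s - c) (nhds c) (nhds 0) :=
      Continuous.tendsto' (by fun_prop) _ _ (sub_self c)
    simpa using (hquot.tendsto.mul hsub).mono_left nhdsWithin_le_nhds
  have hcancel : (fun s => f s / (s - c) * (s - c)) =ᶠ[nhdsWithin c {c}ᶜ] f := by
    filter_upwards [self_mem_nhdsWithin] with s hs
    exact div_mul_cancel₀ _ (sub_ne_zero.2 hs)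
  exact hfc (tendsto_nhds_unique (hf.tendsto.mono_left nhdsWithin_le_nhds)
    (hprod.congr' hcancel))

lemma analyticAt_div_sub_iff {f : ℂ → ℂ} {c s : ℂ} (hf : AnalyticAt ℂ f s) (hfc : f c ≠ 0) :
    AnalyticAt ℂ (fun s => f s / (s - c)) s ↔ s ≠ c := by
  refine ⟨?_, fun hs => hf.fun_div (by fun_prop) (sub_ne_zero.2 hs)⟩
  rintro hquot rfl
  exact not_continuousAt_div_sub hf.continuousAt hfc hquot.continuousAt

end SimplePole

section SinFactor

/-- The factor `-2 sin(πs)/π` of `cuspR`. -/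
noncomputable def sinFactor (s : ℂ) : ℂ :=
  -(2 * Complex.sin ((Real.pi : ℂ) * s) / (Real.pi : ℂ))

lemma hasDerivAt_sinFactor (s : ℂ) :
    HasDerivAt sinFactor (-(2 * Complex.cos (Real.pi * s))) s := by
  have hpi : (Real.pi : ℂ) ≠ 0 := by exact_mod_cast Real.pi_ne_zero
  convert! ((((hasDerivAt_id s).const_mul (Real.pi : ℂ)).csin.const_mul 2).div_const
    (Real.pi : ℂ)).neg using 1
  simp only [id_eq, mul_one]
  field_simp

lemma differentiable_sinFactor : Differentiable ℂ sinFactor :=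
  fun s => (hasDerivAt_sinFactor s).differentiableAt

lemma sinFactor_intCast (n : ℤ) : sinFactor n = 0 := by
  simp [sinFactor, mul_comm (Real.pi : ℂ), Complex.sin_int_mul_pi]

end SinFactor

lemma isBigO_comp_const_mul_inv {f : ℝ → ℂ} (hf : f =O[atTop] fun b : ℝ => b⁻¹) {c : ℝ}
    (hc : 0 < c) : (fun a => f (c * a)) =O[atTop] fun a : ℝ => 1 / a := by
  refine (hf.comp_tendsto (tendsto_id.const_mul_atTop hc)).trans ?_
  simp only [Function.comp_def, id_eq, mul_inv, one_div]
  exact (Asymptotics.isBigO_refl _ _).const_mul_left c⁻¹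

section Cutoff

lemma image_sq_sub_Ioi (b : ℝ) {c : ℝ} (hc : 0 ≤ c) :
    (fun t : ℝ => t ^ 2 - b) '' Set.Ioi c = Set.Ioi (c ^ 2 - b) := by
  ext y
  constructor
  · rintro ⟨t, ht, rfl⟩
    exact sub_lt_sub_right (pow_lt_pow_left₀ ht hc two_ne_zero) b
  · intro (hy : c ^ 2 - b < y)
    have hyb : c ^ 2 < y + b := sub_lt_iff_lt_add.1 hy
    refine ⟨√(y + b), Real.lt_sqrt_of_sq_lt hyb, ?_⟩
    simp [Real.sq_sqrt ((sq_nonneg c).trans hyb.le)]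

lemma integral_Ioi_sq_sub_cpow_mul_two_mul {b c : ℝ} (hc : 0 ≤ c) (hbc : b < c ^ 2) {s : ℂ}
    (hs : 1 < s.re) :
    ∫ t in Set.Ioi c, ((t ^ 2 - b : ℝ) : ℂ) ^ (-s) * ((2 * t : ℝ) : ℂ) =
      ((c ^ 2 - b : ℝ) : ℂ) ^ (1 - s) / (s - 1) := by
  have hderiv : ∀ t ∈ Set.Ioi c, HasDerivWithinAt (fun t : ℝ => t ^ 2 - b) (2 * t) (Set.Ioi c) t :=
    fun t _ => by simpa using ((hasDerivAt_pow 2 t).sub_const b).hasDerivWithinAt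
  have hinj : Set.InjOn (fun t : ℝ => t ^ 2 - b) (Set.Ioi c) := fun t ht u hu htu =>
    (pow_left_inj₀ (hc.trans ht.le) (hc.trans hu.le) two_ne_zero).1 (sub_left_injective htu)
  have hsubst := integral_image_eq_integral_abs_deriv_smul measurableSet_Ioi hderiv hinj
    fun y : ℝ => (y : ℂ) ^ (-s)
  rw [image_sq_sub_Ioi b hc, integral_Ioi_cpow_of_lt (by simpa using hs) (sub_pos.2 hbc)] at hsubst
  calc _ = ∫ t in Set.Ioi c, |2 * t| • ((t ^ 2 - b : ℝ) : ℂ) ^ (-s) :=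
        setIntegral_congr_fun measurableSet_Ioi fun t (ht : c < t) => by
          rw [abs_of_nonneg (by linarith), Complex.real_smul, mul_comm]
    _ = _ := by rw [← hsubst, neg_add_eq_sub, ← neg_sub s 1, neg_div_neg_eq]

/-- The square of the lower limit of integration `(k + 1) ^ δ` in `cuspR a δ (k + 1)`. -/
noncomputable def cutoffSq (δ : ℝ) (k : ℕ) : ℝ :=
  ((k : ℝ) + 1) ^ (2 * δ)

variable {δ : ℝ}

lemma one_le_cutoffSq (hδ : 0 ≤ δ) (k : ℕ) : 1 ≤ cutoffSq δ k :=
  Real.one_le_rpow (by simp) (by positivity)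

lemma ofReal_cutoffSq_cpow (δ : ℝ) (k : ℕ) (z : ℂ) :
    (cutoffSq δ k : ℂ) ^ z = ((k : ℂ) + 1) ^ (2 * δ * z) := by
  have h := Complex.cpow_mul_ofReal_nonneg (by positivity : (0 : ℝ) ≤ (k : ℝ) + 1) (2 * δ) z
  push_cast at h
  simp [h, cutoffSq, Complex.ofReal_cpow (by positivity : (0 : ℝ) ≤ (k : ℝ) + 1)]

lemma norm_binomialTail_cutoffSq_le (hδ : 0 ≤ δ) (J k : ℕ) (s : ℂ) :
    ‖binomialTail (1 / 4) J (cutoffSq δ k) (1 - s)‖ ≤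
      (3 / 4) ^ (-‖1 - s‖) * ((k : ℝ) + 1) ^ (-(2 * δ * (s.re - 1 + J))) := by
  have h := norm_binomialTail_le J (1 - s) (c := 1 / 4) (by norm_num) (by norm_num)
    (one_le_cutoffSq hδ k)
  have hpow : cutoffSq δ k ^ ((1 - s).re - J) =
      ((k : ℝ) + 1) ^ (-(2 * δ * (s.re - 1 + J))) := by
    rw [cutoffSq, ← Real.rpow_mul (by positivity), Complex.sub_re, Complex.one_re]
    ring_nf
  rwa [hpow, show (1 : ℝ) - 1 / 4 = 3 / 4 by norm_num] at h

lemma norm_cutoffSq_sub_cpow_le (hδ : 0 ≤ δ) (k : ℕ) (s : ℂ) :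
    ‖((cutoffSq δ k - 1 / 4 : ℝ) : ℂ) ^ (1 - s)‖ ≤
      (3 / 4) ^ (-‖1 - s‖) * ((k : ℝ) + 1) ^ (-(2 * δ * (s.re - 1))) := by
  simpa only [binomialTail_zero, Nat.cast_zero, add_zero] using
    norm_binomialTail_cutoffSq_le hδ 0 k s

lemma cuspR_add_one_eq (a : ℝ) (hδ : 0 ≤ δ) (k : ℕ) {s : ℂ} (hs : 1 < s.re) :
    cuspR a δ (k + 1) s = sinFactor s / (s - 1) *
      (scaledE1 (4 * Real.pi * a * (k + 1)) * ((cutoffSq δ k - 1 / 4 : ℝ) : ℂ) ^ (1 - s)) := by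
  have hcutoff : (((k : ℝ) + 1) ^ δ) ^ 2 = cutoffSq δ k := by
    rw [cutoffSq, ← Real.rpow_natCast, ← Real.rpow_mul (by positivity), Nat.cast_two, mul_comm]
  have hlt : 1 / 4 < (((k : ℝ) + 1) ^ δ) ^ 2 := by linarith [one_le_cutoffSq hδ k]
  rw [cuspR, Nat.cast_add_one, integral_Ioi_sq_sub_cpow_mul_two_mul (by positivity) hlt hs, hcutoff,
    sinFactor, scaledE1, mul_right_comm (4 * Real.pi)]
  ring

end Cutoff

section CuspSeries

variable {a b δ : ℝ} {s : ℂ}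

lemma norm_cuspR_add_one_le (ha : 0 < a) (hδ : 0 ≤ δ) (k : ℕ) (hs : 1 < s.re) :
    ‖cuspR a δ (k + 1) s‖ ≤
      ‖sinFactor s / (s - 1)‖ * (4 * Real.pi * a)⁻¹ * (3 / 4) ^ (-‖1 - s‖) *
        ((k : ℝ) + 1) ^ (-(1 + 2 * δ * (s.re - 1))) := by
  have hk : (0 : ℝ) < (k : ℝ) + 1 := by positivity
  have hy : 0 < 4 * Real.pi * a * ((k : ℝ) + 1) := by positivity
  have hcutoff := norm_cutoffSq_sub_cpow_le hδ k s
  rw [cuspR_add_one_eq a hδ k hs, norm_mul, norm_mul, Complex.norm_real,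
    Real.norm_of_nonneg (scaledE1_nonneg hy)]
  calc _ ≤ ‖sinFactor s / (s - 1)‖ * ((4 * Real.pi * a * ((k : ℝ) + 1))⁻¹ *
        ((3 / 4) ^ (-‖1 - s‖) * ((k : ℝ) + 1) ^ (-(2 * δ * (s.re - 1))))) := by
        gcongr
        exact scaledE1_le_inv hy
    _ = _ := by
        rw [neg_add, Real.rpow_add hk, Real.rpow_neg_one, mul_inv]
        ring

lemma continuous_rpow_neg_norm_one_sub : Continuous fun s : ℂ => (3 / 4 : ℝ) ^ (-‖1 - s‖) :=
  (Real.continuous_const_rpow (by norm_num)).comp (by fun_prop)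

lemma summableLocallyUniformlyOn_cuspR (ha : 0 < a) (hδ : 0 < δ) :
    SummableLocallyUniformlyOn (fun k => cuspR a δ (k + 1)) {s : ℂ | 1 < s.re} := by
  refine summableLocallyUniformlyOn_of_norm_le_mul_rpow
    (isOpen_lt continuous_const Complex.continuous_re) ?_ (by fun_prop) ?_
    fun k s hs => norm_cuspR_add_one_le ha hδ.le k hs
  · have hquot : ContinuousOn (fun s => sinFactor s / (s - 1)) {s : ℂ | 1 < s.re} :=
      differentiable_sinFactor.continuous.continuousOn.div (by fun_prop) fun s hs h => by
        simp [sub_eq_zero.1 h] at hs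
    exact (hquot.norm.mul_const _).mul continuous_rpow_neg_norm_one_sub.continuousOn
  · intro s hs
    have : 0 < s.re - 1 := sub_pos.2 hs
    exact lt_add_of_pos_right 1 (by positivity)

lemma summable_norm_cuspR (ha : 0 < a) (hδ : 0 < δ) (hs : 1 < s.re) :
    Summable fun k : ℕ => ‖cuspR a δ (k + 1) s‖ :=
  ((summableLocallyUniformlyOn_cuspR ha hδ).summable hs).norm

/-- The error made in the `k`-th term of the series by replacing `scaledE1 y` with `y⁻¹`, where
`y = b * (k + 1)`. -/
noncomputable def errorTerm (b δ : ℝ) (k : ℕ) (s : ℂ) : ℂ :=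
  ((scaledE1 (b * (k + 1)) - (b * (k + 1))⁻¹ : ℝ) : ℂ) *
    ((cutoffSq δ k - 1 / 4 : ℝ) : ℂ) ^ (1 - s)

/-- What is left of the `k`-th term after replacing `scaledE1 y` with `y⁻¹`, dropping the factor
`b⁻¹` and removing the first `J` terms of the binomial expansion. -/
noncomputable def tailTerm (δ : ℝ) (J k : ℕ) (s : ℂ) : ℂ :=
  ((k : ℂ) + 1)⁻¹ * binomialTail (1 / 4) J (cutoffSq δ k) (1 - s)

lemma norm_errorTerm_le (hb : 0 < b) (hδ : 0 ≤ δ) (k : ℕ) (s : ℂ) :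
    ‖errorTerm b δ k s‖ ≤
      (b ^ 2)⁻¹ * (3 / 4) ^ (-‖1 - s‖) * ((k : ℝ) + 1) ^ (-(2 + 2 * δ * (s.re - 1))) := by
  have hk : (0 : ℝ) < (k : ℝ) + 1 := by positivity
  have hcutoff := norm_cutoffSq_sub_cpow_le hδ k s
  rw [errorTerm, norm_mul, Complex.norm_real]
  calc _ ≤ ((b * ((k : ℝ) + 1)) ^ 2)⁻¹ *
        ((3 / 4) ^ (-‖1 - s‖) * ((k : ℝ) + 1) ^ (-(2 * δ * (s.re - 1)))) := by
        gcongr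
        exact abs_scaledE1_sub_inv_le (by positivity)
    _ = _ := by
        rw [neg_add, Real.rpow_add hk, Real.rpow_neg hk.le 2, Real.rpow_two, mul_pow, mul_inv]
        ring

lemma norm_tailTerm_le (hδ : 0 ≤ δ) (J k : ℕ) (s : ℂ) :
    ‖tailTerm δ J k s‖ ≤
      (3 / 4) ^ (-‖1 - s‖) * ((k : ℝ) + 1) ^ (-(1 + 2 * δ * (s.re - 1 + J))) := by
  have hk : (0 : ℝ) < (k : ℝ) + 1 := by positivity
  have hnorm : ‖((k : ℂ) + 1)⁻¹‖ = ((k : ℝ) + 1)⁻¹ := by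
    rw [norm_inv, ← Nat.cast_add_one, Complex.norm_natCast, Nat.cast_add_one]
  rw [tailTerm, norm_mul, hnorm, neg_add, Real.rpow_add hk, Real.rpow_neg_one, mul_left_comm]
  gcongr
  exact norm_binomialTail_cutoffSq_le hδ J k s

lemma one_lt_two_add_mul_re_sub_one (hδ : 0 < δ) (hs : 1 - 1 / (2 * δ) < s.re) :
    1 < 2 + 2 * δ * (s.re - 1) := by
  have h : 1 - s.re < 1 / (2 * δ) := by linarith
  rw [lt_div_iff₀ (by positivity)] at h
  linarith

lemma summableLocallyUniformlyOn_errorTerm (hb : 0 < b) (hδ : 0 < δ) :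
    SummableLocallyUniformlyOn (errorTerm b δ) {s : ℂ | 1 - 1 / (2 * δ) < s.re} :=
  summableLocallyUniformlyOn_of_norm_le_mul_rpow
    (isOpen_lt continuous_const Complex.continuous_re)
    (continuous_const.mul continuous_rpow_neg_norm_one_sub).continuousOn (by fun_prop)
    (fun _ hs => one_lt_two_add_mul_re_sub_one hδ hs) fun k s _ => norm_errorTerm_le hb hδ.le k s

lemma summableLocallyUniformlyOn_tailTerm (hδ : 0 < δ) (J : ℕ) :
    SummableLocallyUniformlyOn (tailTerm δ J) {s : ℂ | 1 - J < s.re} := by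
  refine summableLocallyUniformlyOn_of_norm_le_mul_rpow
    (isOpen_lt continuous_const Complex.continuous_re)
    continuous_rpow_neg_norm_one_sub.continuousOn (by fun_prop) (fun s hs => ?_)
    fun k s _ => norm_tailTerm_le hδ.le J k s
  have : 0 < s.re - 1 + J := by linarith [show 1 - (J : ℝ) < s.re from hs]
  exact lt_add_of_pos_right 1 (by positivity)

lemma differentiable_binomialTail_cutoffSq (hδ : 0 ≤ δ) (J k : ℕ) :
    Differentiable ℂ fun s => binomialTail (1 / 4) J (cutoffSq δ k) (1 - s) := by
  have hx := one_le_cutoffSq hδ k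
  exact (differentiable_binomialTail J (by linarith) (by linarith)).comp (by fun_prop)

lemma differentiableOn_tsum_errorTerm (hb : 0 < b) (hδ : 0 < δ) :
    DifferentiableOn ℂ (fun s => ∑' k, errorTerm b δ k s) {s : ℂ | 1 - 1 / (2 * δ) < s.re} := by
  refine (summableLocallyUniformlyOn_errorTerm hb hδ).differentiableOn
    (isOpen_lt continuous_const Complex.continuous_re) fun k s _ => ?_
  have h := differentiable_binomialTail_cutoffSq hδ.le 0 k
  simp only [binomialTail_zero] at h
  exact (h.const_mul _).differentiableAt

lemma differentiableOn_tsum_tailTerm (hδ : 0 < δ) (J : ℕ) :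
    DifferentiableOn ℂ (fun s => ∑' k, tailTerm δ J k s) {s : ℂ | 1 - J < s.re} :=
  (summableLocallyUniformlyOn_tailTerm hδ J).differentiableOn
    (isOpen_lt continuous_const Complex.continuous_re)
    fun k _ _ => ((differentiable_binomialTail_cutoffSq hδ.le J k).const_mul _).differentiableAt

lemma norm_tsum_errorTerm_le (hb : 0 < b) (hδ : 0 < δ) (hs : 1 - 1 / (2 * δ) < s.re) :
    ‖∑' k, errorTerm b δ k s‖ ≤ (b ^ 2)⁻¹ * (3 / 4) ^ (-‖1 - s‖) *
      ∑' k : ℕ, ((k : ℝ) + 1) ^ (-(2 + 2 * δ * (s.re - 1))) :=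
  tsum_of_norm_bounded
    ((summable_add_one_rpow_neg (one_lt_two_add_mul_re_sub_one hδ hs)).hasSum.mul_left _)
    fun k => norm_errorTerm_le hb hδ.le k s

lemma inv_mul_cutoffSq_cpow (δ : ℝ) (j k : ℕ) (s : ℂ) :
    ((k : ℂ) + 1)⁻¹ * (cutoffSq δ k : ℂ) ^ (1 - s - j) =
      ((k : ℂ) + 1) ^ (-(1 + 2 * δ * (s - (1 - j)))) := by
  rw [ofReal_cutoffSq_cpow, ← Complex.cpow_neg_one, ← Complex.cpow_add _ _ k.cast_add_one_ne_zero]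
  ring_nf

lemma scaledE1_mul_cpow_eq_errorTerm_add (b δ : ℝ) (J k : ℕ) (s : ℂ) :
    scaledE1 (b * (k + 1)) * ((cutoffSq δ k - 1 / 4 : ℝ) : ℂ) ^ (1 - s) =
      errorTerm b δ k s + (b : ℂ)⁻¹ * (tailTerm δ J k s + ∑ j ∈ Finset.range J,
        Ring.choose (1 - s) j * (-1 / 4) ^ j *
          ((k : ℂ) + 1) ^ (-(1 + 2 * δ * (s - (1 - j))))) := by
  simp only [errorTerm, tailTerm, binomialTail, ← inv_mul_cutoffSq_cpow]
  push_cast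
  rw [mul_inv, mul_sub, Finset.mul_sum]
  have hsum (j : ℕ) : ((k : ℂ) + 1)⁻¹ *
      (Ring.choose (1 - s) j * (-(1 / 4 : ℂ)) ^ j * (cutoffSq δ k : ℂ) ^ (1 - s - j)) =
      Ring.choose (1 - s) j * (-1 / 4) ^ j *
        (((k : ℂ) + 1)⁻¹ * (cutoffSq δ k : ℂ) ^ (1 - s - j)) := by ring
  simp only [hsum]
  ring

/-- The part of the continued series proportional to `b⁻¹`, multiplied by `b * (s - 1)`; the
poles of the shifted zeta functions at `s = 1 - j` are cancelled by the zeros of `sinFactor`. -/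
noncomputable def leadingNumerator (δ : ℝ) (J : ℕ) (s : ℂ) : ℂ :=
  sinFactor s * ∑' k, tailTerm δ J k s + ∑ j ∈ Finset.range J,
    Ring.choose (1 - s) j * (-1 / 4) ^ j * mulZetaExt sinFactor (1 - j) (2 * δ) s

/-- The continuation of `(s - 1) * ∑' k, cuspR a δ (k + 1) s`, where `b = 4πa`. -/
noncomputable def cuspNumerator (b δ : ℝ) (J : ℕ) (s : ℂ) : ℂ :=
  sinFactor s * ∑' k, errorTerm b δ k s + (b : ℂ)⁻¹ * leadingNumerator δ J s

lemma hasSum_add_one_cpow_neg_shift (hδ : 0 < δ) (j : ℕ) (hs : 1 < s.re) :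
    HasSum (fun k : ℕ => ((k : ℂ) + 1) ^ (-(1 + 2 * δ * (s - (1 - j)))))
      (riemannZeta (1 + 2 * δ * (s - (1 - j)))) := by
  have hre : (1 + 2 * δ * (s - (1 - j)) : ℂ).re = 1 + 2 * δ * (s.re - (1 - j)) := by
    simp [← Complex.ofReal_ofNat, ← Complex.ofReal_mul]
  have hpos : 0 < s.re - (1 - j) := by linarith [j.cast_nonneg (α := ℝ)]
  exact hasSum_add_one_cpow_neg (hre ▸ lt_add_of_pos_right 1 (by positivity))

lemma mulZetaExt_sinFactor_of_one_lt_re (hδ : 0 < δ) (j : ℕ) (hs : 1 < s.re) :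
    mulZetaExt sinFactor (1 - j) (2 * δ) s =
      sinFactor s * riemannZeta (1 + 2 * δ * (s - (1 - j))) := by
  have hne : s ≠ 1 - j := fun h => by
    have hre : s.re = 1 - j := by simp [h]
    linarith [j.cast_nonneg (α := ℝ)]
  exact mulZetaExt_of_ne (by exact_mod_cast sinFactor_intCast (1 - j)) (by simp [hδ.ne']) hne

lemma tsum_cuspR_eq (ha : 0 < a) (hδ : 0 < δ) (J : ℕ) (hs : 1 < s.re) :
    ∑' k, cuspR a δ (k + 1) s = cuspNumerator (4 * Real.pi * a) δ J s / (s - 1) := by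
  have hb : 0 < 4 * Real.pi * a := by positivity
  have hs_error : 1 - 1 / (2 * δ) < s.re := (sub_lt_self 1 (by positivity)).trans hs
  have hs_tail : 1 - J < s.re := (sub_le_self 1 J.cast_nonneg).trans_lt hs
  have herror := ((summableLocallyUniformlyOn_errorTerm hb hδ).summable hs_error).hasSum
  have htail := ((summableLocallyUniformlyOn_tailTerm hδ J).summable hs_tail).hasSum
  have hzetas := hasSum_sum fun j (_ : j ∈ Finset.range J) =>
    (hasSum_add_one_cpow_neg_shift hδ j hs).mul_left (Ring.choose (1 - s) j * (-1 / 4) ^ j)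
  have hterms := (herror.add ((htail.add hzetas).mul_left
    ((4 * Real.pi * a : ℝ) : ℂ)⁻¹)).mul_left (sinFactor s / (s - 1))
  simp only [cuspR_add_one_eq a hδ.le _ hs, scaledE1_mul_cpow_eq_errorTerm_add _ δ J,
    hterms.tsum_eq, cuspNumerator, leadingNumerator, mulZetaExt_sinFactor_of_one_lt_re hδ _ hs,
    mul_left_comm _ (sinFactor s), ← Finset.mul_sum]
  ring

lemma differentiableOn_leadingNumerator (hδ : 0 < δ) (J : ℕ) :
    DifferentiableOn ℂ (leadingNumerator δ J) {s : ℂ | 1 - J < s.re} := by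
  have htail := differentiableOn_tsum_tailTerm hδ J
  have hsin := differentiable_sinFactor
  have hchoose := differentiable_choose
  have hzeta := differentiable_mulZetaExt differentiable_sinFactor
  refine (hsin.differentiableOn.mul htail).add (Differentiable.differentiableOn ?_)
  fun_prop

lemma differentiableOn_cuspNumerator (hb : 0 < b) (hδ : 0 < δ) {J : ℕ} (hJ : 1 / (2 * δ) ≤ J) :
    DifferentiableOn ℂ (cuspNumerator b δ J) {s : ℂ | 1 - 1 / (2 * δ) < s.re} := by
  have hsub : {s : ℂ | 1 - 1 / (2 * δ) < s.re} ⊆ {s : ℂ | 1 - J < s.re} :=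
    fun s hs => (sub_le_sub_left hJ 1).trans_lt hs
  exact (differentiable_sinFactor.differentiableOn.mul (differentiableOn_tsum_errorTerm hb hδ)).add
    (((differentiableOn_leadingNumerator hδ J).mono hsub).const_mul _)

lemma cuspNumerator_one (b δ : ℝ) {J : ℕ} (hJ : 0 < J) :
    cuspNumerator b δ J 1 = (b : ℂ)⁻¹ * (δ : ℂ)⁻¹ := by
  have hsin : sinFactor 1 = 0 := by exact_mod_cast sinFactor_intCast 1
  have hzeta : mulZetaExt sinFactor 1 (2 * δ) 1 = (δ : ℂ)⁻¹ := by
    rw [mulZetaExt_self, (hasDerivAt_sinFactor 1).deriv, mul_one, Complex.cos_pi]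
    field_simp
  rw [cuspNumerator, leadingNumerator, Finset.sum_eq_single_of_mem 0 (by simpa)]
  · simp [hsin, hzeta]
  · intro j _ hj
    simp [Ring.choose_zero_pos ℂ (Nat.pos_of_ne_zero hj)]

lemma analyticAt_cuspNumerator (hb : 0 < b) (hδ : 0 < δ) {J : ℕ} (hJ : 1 / (2 * δ) ≤ J)
    (hs : 1 - 1 / (2 * δ) < s.re) : AnalyticAt ℂ (cuspNumerator b δ J) s :=
  (differentiableOn_cuspNumerator hb hδ hJ).analyticAt
    ((isOpen_lt continuous_const Complex.continuous_re).mem_nhds hs)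

lemma one_sub_one_div_two_mul_neg (hδ : 0 < δ) (hδ1 : δ < 1 / 2) : 1 - 1 / (2 * δ) < 0 :=
  sub_neg.2 ((one_lt_div (by positivity)).2 (by linarith))

lemma hasDerivAt_cuspNumerator_zero (hb : 0 < b) (hδ : 0 < δ) (hδ1 : δ < 1 / 2) {J : ℕ}
    (hJ : 1 / (2 * δ) ≤ J) :
    HasDerivAt (cuspNumerator b δ J)
      (-2 * ∑' k, errorTerm b δ k 0 + (b : ℂ)⁻¹ * deriv (leadingNumerator δ J) 0) 0 := by
  have hzero : 1 - 1 / (2 * δ) < (0 : ℂ).re := one_sub_one_div_two_mul_neg hδ hδ1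
  have hopen (c : ℝ) : IsOpen {s : ℂ | c < s.re} := isOpen_lt continuous_const Complex.continuous_re
  have herror := (differentiableOn_tsum_errorTerm hb hδ).differentiableAt
    ((hopen _).mem_nhds hzero)
  have hleading := (differentiableOn_leadingNumerator hδ J).differentiableAt
    ((hopen _).mem_nhds ((sub_le_sub_left hJ 1).trans_lt hzero))
  convert! ((hasDerivAt_sinFactor 0).mul herror.hasDerivAt).add
    (hleading.hasDerivAt.const_mul (b : ℂ)⁻¹) using 1
  simp [sinFactor]

lemma deriv_cuspNumerator_div_sub_one_zero (hb : 0 < b) (hδ : 0 < δ) (hδ1 : δ < 1 / 2) {J : ℕ}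
    (hJ : 1 / (2 * δ) ≤ J) :
    deriv (fun s => cuspNumerator b δ J s / (s - 1)) 0 =
      2 * ∑' k, errorTerm b δ k 0 -
        (deriv (leadingNumerator δ J) 0 + leadingNumerator δ J 0) * (b : ℂ)⁻¹ := by
  have hvalue : cuspNumerator b δ J 0 = (b : ℂ)⁻¹ * leadingNumerator δ J 0 := by
    simp [cuspNumerator, sinFactor]
  have hquot := (hasDerivAt_cuspNumerator_zero hb hδ hδ1 hJ).fun_div
    ((hasDerivAt_id' (0 : ℂ)).sub_const 1) (by simp)
  rw [hquot.deriv, hvalue]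
  ring

lemma isBigO_tsum_errorTerm (hδ : 0 < δ) (hs : 1 - 1 / (2 * δ) < s.re) :
    (fun b : ℝ => ∑' k, errorTerm b δ k s) =O[atTop] fun b : ℝ => (b ^ 2)⁻¹ := by
  refine Asymptotics.IsBigO.of_bound ((3 / 4) ^ (-‖1 - s‖) *
    ∑' k : ℕ, ((k : ℝ) + 1) ^ (-(2 + 2 * δ * (s.re - 1)))) ?_
  filter_upwards [eventually_gt_atTop 0] with b hb
  rw [Real.norm_of_nonneg (by positivity), mul_comm, ← mul_assoc]
  exact norm_tsum_errorTerm_le hb hδ hs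

lemma isBigO_deriv_cuspNumerator_div_sub_one_zero (hδ : 0 < δ) (hδ1 : δ < 1 / 2) {J : ℕ}
    (hJ : 1 / (2 * δ) ≤ J) :
    (fun b : ℝ => deriv (fun s => cuspNumerator b δ J s / (s - 1)) 0) =O[atTop]
      fun b : ℝ => b⁻¹ := by
  have hzero : 1 - 1 / (2 * δ) < (0 : ℂ).re := one_sub_one_div_two_mul_neg hδ hδ1
  have hinv : (fun b : ℝ => (b ^ 2)⁻¹) =O[atTop] fun b : ℝ => b⁻¹ := by
    refine Asymptotics.IsBigO.of_bound' ?_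
    filter_upwards [eventually_ge_atTop 1] with b hb
    rw [Real.norm_of_nonneg (by positivity), Real.norm_of_nonneg (by positivity)]
    gcongr
    exact le_self_pow₀ hb two_ne_zero
  have hofReal : (fun b : ℝ => (b : ℂ)⁻¹) =O[atTop] fun b : ℝ => b⁻¹ :=
    Asymptotics.isBigO_of_le _ fun b => by simp
  have herror := ((isBigO_tsum_errorTerm hδ hzero).trans hinv).const_mul_left 2
  have hleading := hofReal.const_mul_left (deriv (leadingNumerator δ J) 0 + leadingNumerator δ J 0)
  refine (herror.sub hleading).congr' ?_ EventuallyEq.rfl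
  filter_upwards [eventually_gt_atTop 0] with b hb
  exact (deriv_cuspNumerator_div_sub_one_zero hb hδ hδ1 hJ).symm

end CuspSeries

theorem statement4_general (δ : ℝ) (hδ0 : 0 < δ) (hδ1 : δ < 1 / 2) :
    ∃ F : ℝ → ℂ → ℂ,
      (∀ a : ℝ, 0 < a →
        (∀ s ∈ {s : ℂ | 1 < s.re},
          Summable (fun k : ℕ => ‖cuspR a δ (k + 1) s‖)) ∧
        TendstoLocallyUniformlyOn
          (fun (n : ℕ) (s : ℂ) => ∑ k ∈ Finset.range n, cuspR a δ (k + 1) s)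
          (fun s : ℂ => ∑' k : ℕ, cuspR a δ (k + 1) s)
          atTop {s : ℂ | 1 < s.re} ∧
        MeromorphicOn (F a) {s : ℂ | 1 - 1 / (2 * δ) < s.re} ∧
        Set.EqOn (F a) (fun s : ℂ => ∑' k : ℕ, cuspR a δ (k + 1) s)
          {s : ℂ | 1 < s.re} ∧
        (∀ s : ℂ, 1 - 1 / (2 * δ) < s.re → (AnalyticAt ℂ (F a) s ↔ s ≠ 1)) ∧
        AnalyticAt ℂ (F a) 0) ∧
      (fun a : ℝ => deriv (F a) 0) =O[atTop] (fun a : ℝ => 1 / a) ∧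
      Tendsto (fun a : ℝ => deriv (F a) 0) atTop (nhds 0) := by
  set J := ⌈1 / (2 * δ)⌉₊
  have hJ : 1 / (2 * δ) ≤ J := Nat.le_ceil _
  have hJ0 : 0 < J := Nat.ceil_pos.2 (by positivity)
  have hbigO := isBigO_comp_const_mul_inv
    (isBigO_deriv_cuspNumerator_div_sub_one_zero hδ0 hδ1 hJ) (by positivity : 0 < 4 * Real.pi)
  refine ⟨fun a s => cuspNumerator (4 * Real.pi * a) δ J s / (s - 1), fun a ha => ?_, hbigO,
    hbigO.trans_tendsto (by simpa only [one_div] using tendsto_inv_atTop_zero)⟩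
  have hb : 0 < 4 * Real.pi * a := by positivity
  have hanalytic (s : ℂ) (hs : 1 - 1 / (2 * δ) < s.re) := analyticAt_cuspNumerator hb hδ0 hJ hs
  have hone : cuspNumerator (4 * Real.pi * a) δ J 1 ≠ 0 := by
    rw [cuspNumerator_one _ _ hJ0]
    exact_mod_cast (by positivity : (4 * Real.pi * a)⁻¹ * δ⁻¹ ≠ 0)
  have hiff (s : ℂ) (hs : 1 - 1 / (2 * δ) < s.re) := analyticAt_div_sub_iff (hanalytic s hs) hone
  have hunif := (summableLocallyUniformlyOn_cuspR ha hδ0).hasSumLocallyUniformlyOn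
  exact ⟨fun s hs => summable_norm_cuspR ha hδ0 hs, hunif.tendstoLocallyUniformlyOn_finsetRange,
    fun s hs => (hanalytic s hs).meromorphicAt.fun_div (by fun_prop),
    fun s hs => (tsum_cuspR_eq ha hδ0 J hs).symm, hiff,
    (hiff 0 (one_sub_one_div_two_mul_neg hδ0 hδ1)).2 zero_ne_one⟩

/-- for fixed `δ ∈ (0,1/8)`, for every `a > 0` the series
`ζ_R(s) = Σ_{k≥1} R_k(s)` converges absolutely and locally uniformly on `Re(s) > 1`, its sum
extends to a meromorphic function on the half-plane `Re(s) > -3` whose only pole is at `s = 1`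
(the extension is analytic precisely away from `s = 1`); in particular it is holomorphic at
`s = 0`, and its derivative at `0` satisfies `ζ_R'(0) = O(1/a)` as `a → ∞`; in particular
`ζ_R'(0) → 0` as `a → ∞`. -/
theorem statement4 (δ : ℝ) (hδ0 : 0 < δ) (hδ1 : δ < 1 / 8) :
    ∃ F : ℝ → ℂ → ℂ,
      (∀ a : ℝ, 0 < a →
        (∀ s ∈ {s : ℂ | 1 < s.re},
          Summable (fun k : ℕ => ‖cuspR a δ (k + 1) s‖)) ∧
        TendstoLocallyUniformlyOn
          (fun (n : ℕ) (s : ℂ) => ∑ k ∈ Finset.range n, cuspR a δ (k + 1) s)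
          (fun s : ℂ => ∑' k : ℕ, cuspR a δ (k + 1) s)
          atTop {s : ℂ | 1 < s.re} ∧
        MeromorphicOn (F a) {s : ℂ | -3 < s.re} ∧
        Set.EqOn (F a) (fun s : ℂ => ∑' k : ℕ, cuspR a δ (k + 1) s)
          {s : ℂ | 1 < s.re} ∧
        (∀ s : ℂ, -3 < s.re → (AnalyticAt ℂ (F a) s ↔ s ≠ 1)) ∧
        AnalyticAt ℂ (F a) 0) ∧
      (fun a : ℝ => deriv (F a) 0) =O[atTop] (fun a : ℝ => 1 / a) ∧
      Tendsto (fun a : ℝ => deriv (F a) 0) atTop (nhds 0) := by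
  have hhalf : 1 - 1 / (2 * δ) ≤ -3 := by
    have : 4 ≤ 1 / (2 * δ) := (le_div_iff₀ (by positivity)).2 (by linarith)
    linarith
  obtain ⟨F, hF, hbigO, hlim⟩ := statement4_general δ hδ0 (by linarith)
  refine ⟨F, fun a ha => ?_, hbigO, hlim⟩
  obtain ⟨hsummable, hunif, hmero, heq, hiff, hzero⟩ := hF a ha
  exact ⟨hsummable, hunif, hmero.mono_set fun s hs => hhalf.trans_lt hs, heq,
    fun s hs => hiff s (hhalf.trans_lt hs), hzero⟩
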